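/- arXiv:1907.05965 — 3 statements merged into one kernel-verified Lean document; each statement's English description precedes it below -/
import Mathlib

section
/- Let h : ℝⁿ → ℝ be an analytic function of n real variables (analytic at every point of ℝⁿ). If h is nontrivial, i.e. there exists a point x₀ ∈ ℝⁿ with h(x₀) ≠ 0, then the zero set Z = {x ∈ ℝⁿ : h(x) = 0} has n-dimensional Lebesgue measure zero. -/
open MeasureTheory Filter Set

/-- A real-analytic function of one real variable that is not identically zero is nonzero almost
everywhere. -/
theorem AnalyticOnNhd.ae_ne_zero_real {f : ℝ → ℝ} (hf : AnalyticOnNhd ℝ f univ) {t₀ : ℝ}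
    (ht₀ : f t₀ ≠ 0) : ∀ᵐ t, f t ≠ 0 := by
  have hle := ae_restrict_le_codiscreteWithin (μ := (volume : Measure ℝ)) MeasurableSet.univ
  rw [Measure.restrict_univ] at hle
  exact hle (hf.preimage_zero_mem_codiscrete ht₀)

/-- The zero set of a real-analytic function on a finite-dimensional space that is not identically
zero is null for every additive Haar measure. The proof restricts the function to the lines through
a point where it does not vanish, and applies Fubini's theorem to the dilations of the zero set
about that point. -/
theorem AnalyticOnNhd.addHaar_zero_set_eq_zero {E : Type*} [NormedAddCommGroup E]
    [NormedSpace ℝ E] [FiniteDimensional ℝ E] [MeasurableSpace E] [BorelSpace E]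
    (μ : Measure E) [μ.IsAddHaarMeasure] {f : E → ℝ} (hf : AnalyticOnNhd ℝ f univ) {x₀ : E}
    (hx₀ : f x₀ ≠ 0) : μ {x | f x = 0} = 0 := by
  have hcont : Continuous f := continuousOn_univ.mp hf.continuousOn
  have hline (y : E) : ∀ᵐ t : ℝ, f (x₀ + t • y) ≠ 0 := by
    refine AnalyticOnNhd.ae_ne_zero_real (f := fun t : ℝ ↦ f (x₀ + t • y)) (t₀ := 0) ?_
      (by simpa using hx₀)
    intro t _
    exact (hf _ (mem_univ _)).comp_of_eq (f := fun t : ℝ ↦ x₀ + t • y) (by fun_prop) rfl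
  have hmeas : MeasurableSet {p : E × ℝ | f (x₀ + p.2 • p.1) ≠ 0} :=
    (isOpen_ne_fun (by fun_prop) continuous_const).measurableSet
  have hdilation : ∀ᵐ t : ℝ, ∀ᵐ y ∂μ, f (x₀ + t • y) ≠ 0 :=
    (Measure.ae_ae_comm hmeas).mp (Eventually.of_forall hline)
  obtain ⟨t, ht, ht₀⟩ := (hdilation.and (Measure.ae_ne volume (0 : ℝ))).exists
  have hnull : μ ((t • ·) ⁻¹' ((x₀ + ·) ⁻¹' {x | f x = 0})) = 0 := by
    simpa [ae_iff] using ht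
  rw [Measure.addHaar_preimage_smul μ ht₀, measure_preimage_add, mul_eq_zero] at hnull
  exact hnull.resolve_left (by simp [ht₀])

/-- If `h : ℝⁿ → ℝ` is analytic at every point of `ℝⁿ` and is not identically
zero, then its zero set has Lebesgue measure zero. -/
theorem analytic_zero_set_measure_zero (n : ℕ)
    (h : EuclideanSpace ℝ (Fin n) → ℝ)
    (hh : ∀ x, AnalyticAt ℝ h x)
    (hnontriv : ∃ x₀, h x₀ ≠ 0) :
    MeasureTheory.volume {x : EuclideanSpace ℝ (Fin n) | h x = 0} = 0 := by
  obtain ⟨x₀, hx₀⟩ := hnontriv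
  exact AnalyticOnNhd.addHaar_zero_set_eq_zero volume (fun x _ ↦ hh x) hx₀
end

section
/- Let m, n ≥ 1 and K = mn. The set of pairs (P, Q) ∈ ℝ^{K×m} × ℝ^{K×n} for which the row-wise Khatri-Rao product P ⊙ Q is a singular K×K matrix (i.e., det(P ⊙ Q) = 0) has Lebesgue measure zero in ℝ^{K·m + K·n}. Equivalently, for almost every (P, Q) with respect to Lebesgue measure, P ⊙ Q is invertible. -/
/-- The row-wise Khatri-Rao product of `P : ℝ^{K×m}` and `Q : ℝ^{K×n}`. -/
def rowKhatriRao {K m n : Type*} (P : Matrix K m ℝ) (Q : Matrix K n ℝ) :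
    Matrix K (m × n) ℝ :=
  fun i jl => P i jl.1 * Q i jl.2

open MeasureTheory Polynomial in
/-- A continuous function on a finite-dimensional real vector space that does not vanish at `x₀`
and is polynomial along every line through `x₀` is nonzero almost everywhere. -/
theorem measure_zero_set_eq_zero_of_polynomial_on_lines {E : Type*} [NormedAddCommGroup E]
    [NormedSpace ℝ E] [FiniteDimensional ℝ E] [MeasurableSpace E] [BorelSpace E]
    (μ : Measure E) [μ.IsAddHaarMeasure] {f : E → ℝ} (hf : Continuous f) {x₀ : E}
    (hx₀ : f x₀ ≠ 0) (hline : ∀ x, ∃ p : ℝ[X], ∀ t : ℝ, f (x₀ + t • x) = p.eval t) :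
    μ {x | f x = 0} = 0 := by
  have hcont : Continuous fun z : E × ℝ => f (x₀ + z.2 • z.1) := by fun_prop
  have hmeas : MeasurableSet {z : E × ℝ | f (x₀ + z.2 • z.1) = 0} :=
    (isClosed_eq hcont continuous_const).measurableSet
  have hprod : (μ.prod (volume : Measure ℝ)) {z : E × ℝ | f (x₀ + z.2 • z.1) = 0} = 0 := by
    rw [Measure.measure_prod_null hmeas]
    refine Filter.Eventually.of_forall fun x => ?_
    obtain ⟨p, hp⟩ := hline x
    have hp0 : p ≠ 0 := by
      rintro rfl
      exact hx₀ (by simpa using hp 0)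
    refine Set.Finite.measure_zero ((Polynomial.finite_setOfPred_isRoot hp0).subset ?_) _
    intro t ht
    exact (hp t).symm.trans ht
  have hae : ∀ᵐ t : ℝ, μ {x | f (x₀ + t • x) = 0} = 0 := by
    exact Measure.measure_ae_null_of_prod_null
      ((Measure.measurePreserving_swap (μ := (volume : Measure ℝ)) (ν := μ)).measure_preimage
        hmeas.nullMeasurableSet |>.trans hprod)
  obtain ⟨t, ht, ht0⟩ := (hae.and (Measure.ae_ne volume (0 : ℝ))).exists
  have hscale := Measure.addHaar_preimage_smul μ ht0 {x | f (x₀ + x) = 0}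
  have htrans := measure_preimage_add μ x₀ {x | f x = 0}
  rw [← htrans]
  refine (mul_eq_zero.mp (hscale.symm.trans ht)).resolve_left ?_
  simpa using pow_pos (abs_pos.mpr ht0) _

/-- The row-wise Khatri-Rao product of the two matrices of coordinate indicators is the
identity. -/
theorem rowKhatriRao_indicator_eq_one (m n : ℕ) :
    (rowKhatriRao
        (Matrix.of fun (i : Fin (m * n)) (j : Fin m) =>
          if (finProdFinEquiv.symm i).1 = j then (1 : ℝ) else 0)
        (Matrix.of fun (i : Fin (m * n)) (l : Fin n) =>
          if (finProdFinEquiv.symm i).2 = l then (1 : ℝ) else 0)).submatrix id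
      (⇑finProdFinEquiv.symm) = 1 := by
  ext i k
  simp only [rowKhatriRao, Matrix.submatrix_apply, Matrix.of_apply, id, Matrix.one_apply,
    ← ite_and, mul_ite, mul_one, mul_zero]
  refine if_congr ?_ rfl rfl
  rw [← finProdFinEquiv.symm.injective.eq_iff (a := i) (b := k), Prod.ext_iff, and_comm]

open Polynomial in
/-- Along an affine line, the determinant of the row-wise Khatri-Rao product is a polynomial. -/
theorem exists_polynomial_det_rowKhatriRao_line {K m n : Type*} [Fintype K] [DecidableEq K]
    (e : K → m × n) (P P' : Matrix K m ℝ) (Q Q' : Matrix K n ℝ) :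
    ∃ p : ℝ[X], ∀ t : ℝ,
      ((rowKhatriRao (P + t • P') (Q + t • Q')).submatrix id e).det = p.eval t := by
  refine ⟨(Matrix.of fun i k => (C (P i (e k).1) + X * C (P' i (e k).1)) *
    (C (Q i (e k).2) + X * C (Q' i (e k).2))).det, fun t => ?_⟩
  rw [← coe_evalRingHom, RingHom.map_det]
  congr 1
  ext i k
  simp [rowKhatriRao, mul_comm t]

/-- For `K = mn`, the set of pairs `(P, Q)` for which the square matrix
`P ⊙ Q` is singular has Lebesgue measure zero; equivalently, `P ⊙ Q` is
invertible for almost every `(P, Q)`. -/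
theorem rowKhatriRao_singular_measure_zero (m n : ℕ) (hm : 1 ≤ m) (hn : 1 ≤ n) :
    MeasureTheory.volume
        {pq : (Fin (m * n) → Fin m → ℝ) × (Fin (m * n) → Fin n → ℝ) |
          ((rowKhatriRao (Matrix.of pq.1) (Matrix.of pq.2)).submatrix id
              (⇑finProdFinEquiv.symm)).det = 0}
      = 0 ∧
    ∀ᵐ pq : (Fin (m * n) → Fin m → ℝ) × (Fin (m * n) → Fin n → ℝ)
        ∂MeasureTheory.volume,
      IsUnit ((rowKhatriRao (Matrix.of pq.1) (Matrix.of pq.2)).submatrix id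
          (⇑finProdFinEquiv.symm)) := by
  set f : (Fin (m * n) → Fin m → ℝ) × (Fin (m * n) → Fin n → ℝ) → ℝ := fun pq =>
    ((rowKhatriRao (Matrix.of pq.1) (Matrix.of pq.2)).submatrix id
      (⇑finProdFinEquiv.symm)).det with hf
  have hcont : Continuous f := by
    refine Continuous.matrix_det (continuous_matrix fun i k => ?_)
    simp only [rowKhatriRao, Matrix.submatrix_apply, Matrix.of_apply]
    fun_prop
  have : (MeasureTheory.volume : MeasureTheory.Measure
      ((Fin (m * n) → Fin m → ℝ) × (Fin (m * n) → Fin n → ℝ))).IsAddHaarMeasure :=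
    @MeasureTheory.Measure.prod.instIsAddHaarMeasure _ _ _ _ _ _ _ _ _ _
      (MeasureTheory.Measure.pi.isAddHaarMeasure _) (MeasureTheory.Measure.pi.isAddHaarMeasure _)
      _ _ _ _
  have hzero : MeasureTheory.volume {pq | f pq = 0} = 0 := by
    refine measure_zero_set_eq_zero_of_polynomial_on_lines _ hcont
      (x₀ := (fun i j => if (finProdFinEquiv.symm i).1 = j then 1 else 0,
        fun i l => if (finProdFinEquiv.symm i).2 = l then 1 else 0)) ?_ fun x =>
      exists_polynomial_det_rowKhatriRao_line _ _ (Matrix.of x.1) _ (Matrix.of x.2)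
    simp only [hf, rowKhatriRao_indicator_eq_one, Matrix.det_one]
    exact one_ne_zero
  refine ⟨hzero, ?_⟩
  filter_upwards [MeasureTheory.measure_eq_zero_iff_ae_notMem.mp hzero] with pq hpq
  exact (Matrix.isUnit_iff_isUnit_det _).mpr (isUnit_iff_ne_zero.mpr hpq)
end

section
/- Let m, n ≥ 1, K = mn, and let μ be a probability measure on ℝ that is absolutely continuous with respect to Lebesgue measure. Consider the random matrices P ∈ ℝ^{K×m} and Q ∈ ℝ^{K×n} whose K·m + K·n entries are i.i.d. with common law μ, i.e., the joint law of all entries is the product measure ⊗μ on ℝ^{K·m+K·n}. Then with probability 1, the row-wise Khatri-Rao product P ⊙ Q is an invertible K×K matrix. -/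
open MeasureTheory

/-- The zero set of a nonzero polynomial in finitely many `Fin`-indexed variables is null for a
product of copies of an atomless measure. -/
theorem MvPolynomial.ae_eval_ne_zero_fin (μ : Measure ℝ) [SigmaFinite μ] [NullSingletonClass μ] {k : ℕ}
    {p : MvPolynomial (Fin k) ℝ} (hp : p ≠ 0) :
    ∀ᵐ x ∂(Measure.pi fun _ : Fin k => μ), MvPolynomial.eval x p ≠ 0 := by
  induction k with
  | zero =>
    refine Filter.Eventually.of_forall fun x hx => hp ?_
    refine MvPolynomial.funext fun y => ?_
    rw [Subsingleton.elim y x, hx, map_zero]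
  | succ k ih =>
    have hmp := measurePreserving_piFinSuccAbove (fun _ : Fin (k + 1) => μ) 0
    have hcont : Continuous fun z : ℝ × (Fin k → ℝ) =>
        MvPolynomial.eval (Fin.cons z.1 z.2 : Fin (k + 1) → ℝ) p :=
      (MvPolynomial.continuous_eval p).comp (by fun_prop)
    have hmeas : MeasurableSet {z : ℝ × (Fin k → ℝ) |
        MvPolynomial.eval (Fin.cons z.1 z.2 : Fin (k + 1) → ℝ) p ≠ 0} :=
      (isOpen_ne.preimage hcont).measurableSet
    have hprod : ∀ᵐ z ∂(μ.prod (Measure.pi fun _ : Fin k => μ)),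
        MvPolynomial.eval (Fin.cons z.1 z.2 : Fin (k + 1) → ℝ) p ≠ 0 := by
      rw [Measure.ae_prod_iff_ae_ae hmeas, Measure.ae_ae_comm hmeas]
      have hlead : (MvPolynomial.finSuccEquiv ℝ k p).leadingCoeff ≠ 0 := by
        simpa using hp
      filter_upwards [ih hlead] with y hy
      have hq : Polynomial.map (MvPolynomial.eval y) (MvPolynomial.finSuccEquiv ℝ k p) ≠ 0 :=
        fun h => hy (by
          simpa [Polynomial.coeff_map] using
            congrArg (Polynomial.coeff · (MvPolynomial.finSuccEquiv ℝ k p).natDegree) h)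
      have hfin := (Polynomial.finite_setOfPred_isRoot hq).measure_zero μ
      rw [ae_iff]
      simpa [MvPolynomial.eval_eq_eval_mv_eval', Polynomial.IsRoot] using hfin
    have hpull := hmp.quasiMeasurePreserving.ae hprod
    filter_upwards [hpull] with x hx
    have hcons : (Fin.cons (x 0) (fun i => x i.succ) : Fin (k + 1) → ℝ) = x :=
      Fin.cons_self_tail x
    rw [← hcons]
    exact hx

/-- The zero set of a nonzero real polynomial in finitely many variables is null for a product of
copies of an atomless measure. -/
theorem MvPolynomial.ae_eval_ne_zero {ι : Type*} [Fintype ι] (μ : Measure ℝ) [SigmaFinite μ]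
    [NullSingletonClass μ] {p : MvPolynomial ι ℝ} (hp : p ≠ 0) :
    ∀ᵐ x ∂(Measure.pi fun _ : ι => μ), MvPolynomial.eval x p ≠ 0 := by
  let e := Fintype.equivFin ι
  have hq : MvPolynomial.rename e p ≠ 0 := fun h =>
    hp (MvPolynomial.rename_injective e e.injective (by simpa using h))
  have hmp := measurePreserving_piCongrLeft (fun _ : Fin (Fintype.card ι) => μ) e
  filter_upwards [hmp.quasiMeasurePreserving.ae (MvPolynomial.ae_eval_ne_zero_fin μ hq)] with x hx
  rw [MvPolynomial.eval_rename] at hx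
  convert hx using 3
  funext i
  exact (MeasurableEquiv.piCongrLeft_apply_apply (β := fun _ => ℝ) e x i).symm

/-- If the `Km + Kn` entries of `P` and `Q` are i.i.d. with a common law `μ`
absolutely continuous w.r.t. Lebesgue measure, then with probability 1 the
row-wise Khatri-Rao product `P ⊙ Q` (for `K = mn`) is invertible. -/
theorem rowKhatriRao_ae_invertible (m n : ℕ) (hm : 1 ≤ m) (hn : 1 ≤ n)
    (μ : Measure ℝ) [IsProbabilityMeasure μ] (hμ : μ ≪ volume) :
    ∀ᵐ x : ((Fin (m * n) × Fin m) ⊕ (Fin (m * n) × Fin n)) → ℝ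
        ∂(Measure.pi fun _ => μ),
      IsUnit
        ((rowKhatriRao
            (Matrix.of fun i j => x (Sum.inl (i, j)))
            (Matrix.of fun i l => x (Sum.inr (i, l)))).submatrix id
          (⇑finProdFinEquiv.symm)) := by
  have : NullSingletonClass μ := ⟨fun a => hμ (measure_singleton a)⟩
  let M : Matrix (Fin (m * n)) (Fin (m * n))
      (MvPolynomial ((Fin (m * n) × Fin m) ⊕ (Fin (m * n) × Fin n)) ℝ) :=
    Matrix.of fun i k =>
      MvPolynomial.X (Sum.inl (i, (finProdFinEquiv.symm k).1)) *
        MvPolynomial.X (Sum.inr (i, (finProdFinEquiv.symm k).2))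
  have heval (x : ((Fin (m * n) × Fin m) ⊕ (Fin (m * n) × Fin n)) → ℝ) :
      MvPolynomial.eval x M.det =
        ((rowKhatriRao
            (Matrix.of fun i j => x (Sum.inl (i, j)))
            (Matrix.of fun i l => x (Sum.inr (i, l)))).submatrix id
          (⇑finProdFinEquiv.symm)).det := by
    rw [RingHom.map_det]
    congr 1
    ext i k
    simp [M, rowKhatriRao]
  have hdet : M.det ≠ 0 := by
    intro h
    have hone := heval (Sum.elim
      (fun a => if (finProdFinEquiv.symm a.1).1 = a.2 then 1 else 0)
      (fun a => if (finProdFinEquiv.symm a.1).2 = a.2 then 1 else 0))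
    rw [h, map_zero] at hone
    refine zero_ne_one (hone.trans ?_)
    rw [← Matrix.det_one (n := Fin (m * n)) (R := ℝ)]
    congr 1
    ext i k
    obtain ⟨⟨a, b⟩, rfl⟩ := finProdFinEquiv.surjective i
    obtain ⟨⟨c, d⟩, rfl⟩ := finProdFinEquiv.surjective k
    simp only [rowKhatriRao, Matrix.submatrix_apply, Matrix.of_apply, id_eq,
      Equiv.symm_apply_apply, Sum.elim_inl, Sum.elim_inr, Matrix.one_apply,
      EmbeddingLike.apply_eq_iff_eq, Prod.mk.injEq]
    by_cases hac : a = c <;> by_cases hbd : b = d <;> simp [hac, hbd]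
  filter_upwards [MvPolynomial.ae_eval_ne_zero μ hdet] with x hx
  rw [Matrix.isUnit_iff_isUnit_det, ← heval]
  exact hx.isUnit
end
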